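/- Let F₃ be the free group on three generators q, a, b, and let w₁, w₂ be elements of the subgroup of F₃ generated by a and b. If the element (w₁ q w₂) * a * (w₁ q w₂) * b * (w₁ q w₂) is conjugate in F₃ to q * a * q * b * q, then w₁ = 1 and w₂ = 1. -/

import Mathlib

/-!
A word in which the letter `q` occurs only positively reads `q x₁ q x₂ ⋯ q xₙ` up to rotation, with
`q`-free elements `xᵢ`, and is then automatically cyclically reduced. Conjugate cyclically reduced
words are rotations of each other, and such a rotation permutes the blocks `q xᵢ` cyclically, so the
cyclic sequence `(x₁, …, xₙ)` is a conjugacy invariant.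

Moving `w₁` from the front to the back turns the hypothesis into the assertion that
`(w₂ a w₁, w₂ b w₁, w₂ w₁)` is a rotation of `(a, b, 1)`. Comparing exponent sums, `w₂ w₁` has
exponent sum `0`, which leaves only `w₂ w₁ = 1`; then `w₂` commutes with both `a` and `b`, so it is
trivial.
-/

section CyclicallyReducedWords

open FreeGroup List

variable {α : Type*} {L L₁ L₂ G : List (α × Bool)}

theorem isReduced_invRev (h : IsReduced L) : IsReduced (invRev L) := by
  classical
  rw [isReduced_iff_reduce_eq, reduce_invRev, h.reduce_eq]

theorem isCyclicallyReduced_iff_isReduced_append_self :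
    IsCyclicallyReduced L ↔ IsReduced (L ++ L) := by
  simp only [isCyclicallyReduced_iff, FreeGroup.IsReduced, isChain_append, and_self_left]

theorem isCyclicallyReduced_of_isRotated (h : L₁ ~r L₂) (h₁ : IsCyclicallyReduced L₁) :
    IsCyclicallyReduced L₂ := by
  obtain ⟨n, rfl⟩ := h
  rw [isCyclicallyReduced_iff_isReduced_append_self]
  obtain ⟨A, B, rfl, hrot⟩ : ∃ A B, L₁ = A ++ B ∧ L₁.rotate n = B ++ A :=
    ⟨_, _, (take_append_drop _ L₁).symm, rotate_eq_drop_append_take_mod⟩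
  rw [hrot]
  exact (h₁.flatten_replicate 3).isReduced.infix ⟨A, B, by simp [replicate_succ]⟩

theorem not_isCyclicallyReduced_invRev_append_append (hG : G ≠ []) :
    ¬ IsCyclicallyReduced (invRev G ++ L ++ G) := by
  classical
  intro h
  rw [isCyclicallyReduced_iff_isReduced_append_self] at h
  have hred : IsReduced (G ++ invRev G) := h.infix ⟨invRev G ++ L, L ++ G, by simp⟩
  have hone : mk (G ++ invRev G) = 1 := by rw [← mul_mk, ← inv_mk, mul_inv_cancel]
  have hnil : G ++ invRev G = [] := by
    rw [← hred.reduce_eq, ← toWord_mk, hone, toWord_one]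
  exact hG (append_eq_nil_iff.1 hnil).1

theorem isReduced_append_cons_or_exists_eq_concat {s : α × Bool} (hL : IsReduced L)
    (hG : IsReduced (s :: G)) :
    IsReduced (L ++ s :: G) ∨ ∃ L', L = L' ++ [(s.1, !s.2)] := by
  rcases eq_nil_or_concat' L with rfl | ⟨L', t, rfl⟩
  · exact .inl hG
  by_cases hts : t.1 = s.1 → t.2 = s.2
  · exact .inl (isChain_append.2 ⟨hL, hG, by simpa using hts⟩)
  · rw [Classical.not_imp] at hts
    exact .inr ⟨L', by rw [← hts.1, ← Bool.eq_not_of_ne hts.2]⟩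

theorem isReduced_conj_or_exists_eq_cons_or_exists_eq_concat {s : α × Bool} (hL : IsReduced L)
    (hne : L ≠ []) (hG : IsReduced (s :: G)) :
    IsReduced (invRev (s :: G) ++ L ++ s :: G) ∨ (∃ L', L = s :: L') ∨
      ∃ L', L = L' ++ [(s.1, !s.2)] := by
  rcases isReduced_append_cons_or_exists_eq_concat hL hG with hright | hlast
  · rcases isReduced_append_cons_or_exists_eq_concat (isReduced_invRev hL) hG with hleft | ⟨L', hL'⟩
    · refine .inl (IsReduced.append_overlap ?_ hright hne)
      simpa using isReduced_invRev hleft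
    · refine .inr (.inl ⟨invRev L', ?_⟩)
      rw [← invRev_invRev (L₁ := L), hL']
      simp [invRev]
  · exact .inr (.inr hlast)

theorem isRotated_of_mk_mul_mk_eq (hG : IsReduced G) (h₁ : IsCyclicallyReduced L₁)
    (h₂ : IsCyclicallyReduced L₂) (h : mk L₁ * mk G = mk G * mk L₂) : L₁ ~r L₂ := by
  classical
  induction G generalizing L₁ with
  | nil =>
    have hmk : mk L₁ = mk L₂ := by simpa [← one_eq_mk] using h
    rw [← h₁.isReduced.reduce_eq, reduce.sound hmk, h₂.isReduced.reduce_eq]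
  | cons s G ih =>
    have hG' : IsReduced G := hG.infix ⟨[s], [], by simp⟩
    have hconj : mk L₂ = mk (invRev (s :: G) ++ L₁ ++ s :: G) := by
      rw [← mul_mk, ← mul_mk, ← inv_mk, mul_assoc, h, inv_mul_cancel_left]
    rcases eq_or_ne L₁ [] with rfl | hne
    · have hone : mk L₂ = 1 := by rw [hconj, append_nil, ← mul_mk, ← inv_mk, inv_mul_cancel]
      rw [← h₂.isReduced.reduce_eq, ← toWord_mk, hone, toWord_one]
    rcases isReduced_conj_or_exists_eq_cons_or_exists_eq_concat h₁.isReduced hne hG with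
      hred | ⟨L', rfl⟩ | ⟨L', rfl⟩
    · have heq : L₂ = invRev (s :: G) ++ L₁ ++ s :: G := by
        rw [← h₂.isReduced.reduce_eq, reduce.sound hconj, hred.reduce_eq]
      exact absurd (heq ▸ h₂) (not_isCyclicallyReduced_invRev_append_append (cons_ne_nil s G))
    · have hrot : s :: L' ~r L' ++ [s] := .cons_append_singleton
      refine hrot.trans (ih hG' (isCyclicallyReduced_of_isRotated hrot h₁) ?_)
      rw [← singleton_append, ← mul_mk, ← singleton_append (l := G), ← mul_mk] at h
      rw [← mul_mk]
      simpa only [mul_assoc, mul_right_inj] using h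
    · have hrot : L' ++ [(s.1, !s.2)] ~r (s.1, !s.2) :: L' := isRotated_concat _ _
      refine hrot.trans (ih hG' (isCyclicallyReduced_of_isRotated hrot h₁) ?_)
      have hinv : mk [(s.1, !s.2)] = (mk [s])⁻¹ := by simp [inv_mk, invRev]
      rw [← mul_mk, hinv, ← singleton_append (l := G), ← mul_mk] at h
      rw [← singleton_append, ← mul_mk, hinv, mul_assoc, inv_mul_eq_iff_eq_mul]
      simpa only [mul_assoc, inv_mul_cancel_left] using h

theorem isRotated_of_isConj_mk (h₁ : IsCyclicallyReduced L₁) (h₂ : IsCyclicallyReduced L₂)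
    (h : IsConj (mk L₁) (mk L₂)) : L₁ ~r L₂ := by
  classical
  obtain ⟨c, hc⟩ := isConj_iff.1 h
  refine isRotated_of_mk_mul_mk_eq (G := c⁻¹.toWord) isReduced_toWord h₁ h₂ ?_
  rw [mk_toWord, ← hc]
  group

end CyclicallyReducedWords

section ListBlocks

open List

variable {β : Type*} {q : β} {Ls Ms : List (List β)}

theorem isRotated_triple_iff {x y z x' y' z' : β} :
    [x, y, z] ~r [x', y', z'] ↔
      (x = x' ∧ y = y' ∧ z = z') ∨ (x = y' ∧ y = z' ∧ z = x') ∨ (x = z' ∧ y = x' ∧ z = y') := by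
  simp [← mem_cyclicPermutations_iff, cyclicPermutations_cons]

theorem intercalate_nil_cons_eq_flatMap (q : β) (Ls : List (List β)) :
    [q].intercalate ([] :: Ls) = Ls.flatMap (q :: ·) := by
  induction Ls with
  | nil => simp
  | cons L Ls ih => cases Ls <;> simp_all

theorem splitOn_flatMap_cons [DecidableEq β] (hLs : ∀ L ∈ Ls, q ∉ L) :
    (Ls.flatMap (q :: ·)).splitOn q = [] :: Ls := by
  rw [← intercalate_nil_cons_eq_flatMap]
  exact splitOn_intercalate q (by simpa using hLs) (by simp)

theorem eq_of_mem_head?_flatMap_cons {p : β} (hp : p ∈ (Ls.flatMap (q :: ·)).head?) :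
    p = q := by
  cases Ls <;> simp_all

theorem isRotated_of_flatMap_cons (hLs : ∀ L ∈ Ls, q ∉ L) (hMs : ∀ M ∈ Ms, q ∉ M)
    (h : Ls.flatMap (q :: ·) ~r Ms.flatMap (q :: ·)) : Ls ~r Ms := by
  classical
  obtain ⟨A, B, hA, hB⟩ : ∃ A B, Ls.flatMap (q :: ·) = A ++ B ∧ Ms.flatMap (q :: ·) = B ++ A := by
    obtain ⟨n, hn⟩ := h
    exact ⟨_, _, (take_append_drop _ _).symm, hn ▸ rotate_eq_drop_append_take_mod⟩
  have hLs' := splitOn_flatMap_cons hLs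
  have hMs' := splitOn_flatMap_cons hMs
  rw [hA] at hLs'
  rw [hB] at hMs'
  rcases A with _ | ⟨x, A⟩
  · obtain rfl : Ls = Ms := by simp_all
    rfl
  rcases B with _ | ⟨y, B⟩
  · obtain rfl : Ls = Ms := by simp_all
    rfl
  obtain rfl : x = q := eq_of_mem_head?_flatMap_cons (Ls := Ls) (by simp [hA])
  obtain rfl : y = x := eq_of_mem_head?_flatMap_cons (Ls := Ms) (by simp [hB])
  rw [splitOn_append_cons_self, ← nil_append (y :: A), splitOn_append_cons_self] at hLs'
  rw [splitOn_append_cons_self, ← nil_append (y :: B), splitOn_append_cons_self] at hMs'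
  simp only [splitOn_nil, cons_append, nil_append, cons.injEq, true_and] at hLs' hMs'
  rw [← hLs', ← hMs']
  exact isRotated_append

end ListBlocks

section FreeGroupBlocks

open FreeGroup List

variable {α : Type*} {q : α}

theorem isReduced_flatMap_cons {Ls : List (List (α × Bool))} {b : Bool}
    (hred : ∀ L ∈ Ls, IsReduced L) (hq : ∀ L ∈ Ls, ∀ p ∈ L, p.1 ≠ q) :
    IsReduced (Ls.flatMap ((q, b) :: ·)) := by
  induction Ls with
  | nil => simp
  | cons L Ls ih =>
    rw [forall_mem_cons] at hred hq
    have hblock : FreeGroup.IsReduced ((q, b) :: L) :=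
      hred.1.cons fun p hp hpq ↦ absurd hpq.symm (hq.1 p (mem_of_mem_head? hp))
    refine hblock.append (ih hred.2 hq.2) fun p hp r hr hpr ↦ ?_
    obtain rfl := eq_of_mem_head?_flatMap_cons hr
    rcases mem_cons.1 (mem_of_mem_getLast? hp) with rfl | hpL
    · rfl
    · exact absurd hpr (hq.1 p hpL)

theorem isCyclicallyReduced_flatMap_cons {Ls : List (List (α × Bool))} {b : Bool}
    (hred : ∀ L ∈ Ls, IsReduced L) (hq : ∀ L ∈ Ls, ∀ p ∈ L, p.1 ≠ q) :
    IsCyclicallyReduced (Ls.flatMap ((q, b) :: ·)) := by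
  rw [isCyclicallyReduced_iff_isReduced_append_self, ← flatMap_append]
  exact isReduced_flatMap_cons (by simpa [or_imp] using hred) (by simpa [or_imp] using hq)

theorem mk_flatMap_cons_toWord [DecidableEq α] (xs : List (FreeGroup α)) :
    mk ((xs.map toWord).flatMap ((q, true) :: ·)) = (xs.map (of q * ·)).prod := by
  induction xs with
  | nil => simp [one_eq_mk]
  | cons x xs ih =>
    rw [map_cons, flatMap_cons, map_cons, prod_cons, ← ih, ← mul_mk, ← singleton_append, ← mul_mk,
      mk_toWord]
    rfl

theorem fst_mem_of_mem_toWord_of_mem_closure [DecidableEq α] {s : Set α} {x : FreeGroup α}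
    (hx : x ∈ Subgroup.closure (of '' s)) : ∀ p ∈ x.toWord, p.1 ∈ s := by
  induction hx using Subgroup.closure_induction with
  | mem x hx =>
    obtain ⟨a, ha, rfl⟩ := hx
    simpa using ha
  | one => simp
  | mul x y _ _ hx hy =>
    exact fun p hp ↦ (mem_append.1 ((toWord_mul_sublist x y).subset hp)).elim (hx p) (hy p)
  | inv x _ hx =>
    rw [toWord_inv]
    intro p hp
    obtain ⟨r, hr, rfl⟩ := mem_map.1 (mem_reverse.1 hp)
    exact hx r hr

theorem isRotated_of_isConj_prod_map_of_mul {xs ys : List (FreeGroup α)}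
    (hxs : ∀ x ∈ xs, x ∈ Subgroup.closure (of '' {q}ᶜ))
    (hys : ∀ y ∈ ys, y ∈ Subgroup.closure (of '' {q}ᶜ))
    (h : IsConj (xs.map (of q * ·)).prod (ys.map (of q * ·)).prod) : xs ~r ys := by
  classical
  have hfst : ∀ {zs : List (FreeGroup α)}, (∀ z ∈ zs, z ∈ Subgroup.closure (of '' {q}ᶜ)) →
      ∀ L ∈ zs.map toWord, ∀ p ∈ L, p.1 ≠ q := by
    intro zs hzs
    rw [forall_mem_map]
    exact fun z hz ↦ fst_mem_of_mem_toWord_of_mem_closure (hzs z hz)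
  have hred : ∀ {zs : List (FreeGroup α)}, ∀ L ∈ zs.map toWord, FreeGroup.IsReduced L := by
    simp [isReduced_toWord]
  rw [← mk_flatMap_cons_toWord, ← mk_flatMap_cons_toWord] at h
  have hblocks := isRotated_of_isConj_mk (isCyclicallyReduced_flatMap_cons hred (hfst hxs))
    (isCyclicallyReduced_flatMap_cons hred (hfst hys)) h
  have hwords : xs.map toWord ~r ys.map toWord :=
    isRotated_of_flatMap_cons (fun L hL hq ↦ hfst hxs L hL _ hq rfl)
      (fun L hL hq ↦ hfst hys L hL _ hq rfl) hblocks
  simpa [Function.comp_def, mk_toWord] using hwords.map mk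

end FreeGroupBlocks

section Commute

open FreeGroup

variable {α : Type*} {a b : α} {w : FreeGroup α}

theorem fst_eq_of_mem_head?_toWord_of_commute [DecidableEq α] (h : Commute (of a) w) :
    ∀ p ∈ w.toWord.head?, p.1 = a := by
  intro p hp
  by_contra hpa
  obtain ⟨L, hL⟩ : ∃ L, w.toWord = p :: L := ⟨_, List.eq_cons_of_mem_head? hp⟩
  have hred : FreeGroup.IsReduced ((a, true) :: w.toWord) := by
    rw [hL, isReduced_cons_cons, ← hL]
    exact ⟨fun hap ↦ absurd hap.symm hpa, isReduced_toWord⟩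
  have hmul : (of a * w).toWord = (a, true) :: w.toWord := by
    rw [toWord_mul, toWord_of]
    exact hred.reduce_eq
  have hsub : ((a, true) :: w.toWord).Sublist (w.toWord ++ [(a, true)]) := by
    simpa [← h.eq, hmul] using toWord_mul_sublist w (of a)
  have heq : (a, true) :: w.toWord = w.toWord ++ [(a, true)] := hsub.eq_of_length (by simp)
  rw [hL, List.cons_append, List.cons.injEq] at heq
  exact hpa (heq.1 ▸ rfl)

theorem eq_one_of_commute_of_of_commute_of (hab : a ≠ b) (ha : Commute (of a) w)
    (hb : Commute (of b) w) : w = 1 := by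
  classical
  rw [← toWord_eq_nil_iff, ← List.head?_eq_none_iff, Option.eq_none_iff_forall_not_mem]
  intro p hp
  exact hab ((fst_eq_of_mem_head?_toWord_of_commute ha p hp).symm.trans
    (fst_eq_of_mem_head?_toWord_of_commute hb p hp))

end Commute

section ConjugateWords

open FreeGroup (of)

variable {α : Type*} {q a b : α} {w₁ w₂ : FreeGroup α}

/-- The sum of the exponents of a word: the homomorphism to `ℤ`, written multiplicatively, sending
every generator to `1`. -/
def exponentSum : FreeGroup α →* Multiplicative ℤ :=
  FreeGroup.lift fun _ ↦ Multiplicative.ofAdd 1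

@[simp]
theorem exponentSum_of (a : α) : exponentSum (of a) = Multiplicative.ofAdd 1 :=
  FreeGroup.lift_apply_of

theorem isRotated_of_isConj_qxqyq {x y : FreeGroup α} (hx : x ∈ Subgroup.closure (of '' {q}ᶜ))
    (hy : y ∈ Subgroup.closure (of '' {q}ᶜ)) (h₁ : w₁ ∈ Subgroup.closure (of '' {q}ᶜ))
    (h₂ : w₂ ∈ Subgroup.closure (of '' {q}ᶜ))
    (h : IsConj ((w₁ * of q * w₂) * x * (w₁ * of q * w₂) * y * (w₁ * of q * w₂))
      (of q * x * of q * y * of q)) :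
    [w₂ * x * w₁, w₂ * y * w₁, w₂ * w₁] ~r [x, y, 1] := by
  refine isRotated_of_isConj_prod_map_of_mul (q := q) ?_ ?_ ?_
  · simp [mul_mem, h₁, h₂, hx, hy]
  · simp [hx, hy]
  · refine IsConj.trans (isConj_iff.2 ⟨w₁, ?_⟩) (h.trans (isConj_iff.2 ⟨1, ?_⟩))
    · simp only [List.map_cons, List.map_nil, List.prod_cons, List.prod_nil]
      group
    · simp [mul_assoc]

theorem map_mul_eq_one_of_isConj_qxqyq {G A : Type*} [Group G] [CommGroup A] [IsMulTorsionFree A]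
    (f : G →* A) {w₁ w₂ q x y : G}
    (h : IsConj ((w₁ * q * w₂) * x * (w₁ * q * w₂) * y * (w₁ * q * w₂)) (q * x * q * y * q)) :
    f (w₂ * w₁) = 1 := by
  have hpow : f (w₂ * w₁) ^ 3 * f (q * x * q * y * q) = f (q * x * q * y * q) := calc
    _ = f ((w₁ * q * w₂) * x * (w₁ * q * w₂) * y * (w₁ * q * w₂)) := by
      simp only [map_mul, pow_succ, pow_zero, one_mul]
      ac_rfl
    _ = f (q * x * q * y * q) := isConj_iff_eq.1 (f.map_isConj h)
  exact (pow_eq_one_iff_left three_ne_zero).1 (mul_eq_right.1 hpow)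

theorem conj_qaqbq_forces_trivial_general (hqa : q ≠ a) (hqb : q ≠ b) (hab : a ≠ b)
    (h₁ : w₁ ∈ Subgroup.closure (of '' {q}ᶜ)) (h₂ : w₂ ∈ Subgroup.closure (of '' {q}ᶜ))
    (h : IsConj ((w₁ * of q * w₂) * of a * (w₁ * of q * w₂) * of b * (w₁ * of q * w₂))
      (of q * of a * of q * of b * of q)) :
    w₁ = 1 ∧ w₂ = 1 := by
  have hmem {c : α} (hqc : q ≠ c) : of c ∈ Subgroup.closure (of '' {q}ᶜ) :=
    Subgroup.subset_closure (Set.mem_image_of_mem of hqc.symm)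
  have hsum := map_mul_eq_one_of_isConj_qxqyq exponentSum h
  have hrot := isRotated_of_isConj_qxqyq (hmem hqa) (hmem hqb) h₁ h₂ h
  obtain ⟨hinv, ha, hb⟩ : w₂ * w₁ = 1 ∧ w₂ * of a * w₁ = of a ∧ w₂ * of b * w₁ = of b := by
    rcases isRotated_triple_iff.1 hrot with ⟨ha, hb, hone⟩ | ⟨-, -, hof⟩ | ⟨-, -, hof⟩
    · exact ⟨hone, ha, hb⟩
    all_goals
      rw [hof, exponentSum_of] at hsum
      exact absurd (Multiplicative.ofAdd.injective hsum) one_ne_zero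
  obtain rfl : w₁ = w₂⁻¹ := eq_inv_of_mul_eq_one_right hinv
  have hw₂ : w₂ = 1 := eq_one_of_commute_of_of_commute_of hab
    (mul_inv_eq_iff_eq_mul.1 ha).symm (mul_inv_eq_iff_eq_mul.1 hb).symm
  simp [hw₂]

end ConjugateWords

/-- Let `F₃` be free on `q, a, b` (`q = of 0`, `a = of 1`, `b = of 2`) and let
`w₁, w₂ ∈ ⟨a, b⟩`. If `(w₁ q w₂) a (w₁ q w₂) b (w₁ q w₂)` is conjugate in `F₃` to
`q a q b q`, then `w₁ = 1` and `w₂ = 1`. -/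
theorem conj_qaqbq_forces_trivial (w₁ w₂ : FreeGroup (Fin 3))
    (h₁ : w₁ ∈ Subgroup.closure ({FreeGroup.of 1, FreeGroup.of 2} : Set (FreeGroup (Fin 3))))
    (h₂ : w₂ ∈ Subgroup.closure ({FreeGroup.of 1, FreeGroup.of 2} : Set (FreeGroup (Fin 3))))
    (h : IsConj
      ((w₁ * FreeGroup.of 0 * w₂) * FreeGroup.of 1 * (w₁ * FreeGroup.of 0 * w₂) *
        FreeGroup.of 2 * (w₁ * FreeGroup.of 0 * w₂))
      (FreeGroup.of 0 * FreeGroup.of 1 * FreeGroup.of 0 * FreeGroup.of 2 * FreeGroup.of 0)) :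
    w₁ = 1 ∧ w₂ = 1 := by
  have hle : Subgroup.closure {FreeGroup.of 1, FreeGroup.of 2} ≤
      Subgroup.closure (FreeGroup.of '' ({0}ᶜ : Set (Fin 3))) :=
    Subgroup.closure_mono (by rintro _ (rfl | rfl) <;> exact Set.mem_image_of_mem _ (by decide))
  exact conj_qaqbq_forces_trivial_general (by decide) (by decide) (by decide) (hle h₁) (hle h₂) h
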